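/- arXiv:2507.07065 — 2 statements merged into one kernel-verified Lean document; each statement's English description precedes it below -/
import Mathlib

section
/- Let A, B be positive semidefinite matrices with B invertible and α > 1. Then ∫₀^∞ Tr[B (B + t·1)⁻¹ (A (B + t·1)⁻¹)^α] dt = ((α-1)/α) ∫₀^∞ Tr[(A (B + t·1)⁻¹)^α] dt, where the trace of the non-Hermitian power is interpreted as Tr[((B+t)^{-1/2} A (B+t)^{-1/2})^α · (similarity-related factors)], i.e., Tr[(A(B+t·1)⁻¹)^α] := Tr[((B+t·1)^{-1/2} A (B+t·1)^{-1/2})^α]. -/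
open MeasureTheory Matrix
open scoped ComplexOrder
noncomputable section

/-- The positive part `(X)₊` of a Hermitian matrix, via continuous functional calculus. -/
def mposPart {n : ℕ} (X : Matrix (Fin n) (Fin n) ℂ) : Matrix (Fin n) (Fin n) ℂ :=
  cfc (fun x : ℝ => max x 0) X

/-- The spectral projection of a Hermitian matrix onto its strictly positive part,
so that `projPos (A - γ • B)` is the projection `{A > γB}`. -/
def projPos {n : ℕ} (X : Matrix (Fin n) (Fin n) ℂ) : Matrix (Fin n) (Fin n) ℂ :=
  cfc (fun x : ℝ => if 0 < x then (1:ℝ) else 0) X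

/-- The spectral projection of a Hermitian matrix onto its nonnegative part,
so that `projNonneg (γ • B - A)` is the projection `{A ≤ γB}`. -/
def projNonneg {n : ℕ} (X : Matrix (Fin n) (Fin n) ℂ) : Matrix (Fin n) (Fin n) ℂ :=
  cfc (fun x : ℝ => if 0 ≤ x then (1:ℝ) else 0) X

/-- Matrix logarithm via functional calculus. -/
def mlog {n : ℕ} (X : Matrix (Fin n) (Fin n) ℂ) : Matrix (Fin n) (Fin n) ℂ :=
  cfc Real.log X

/-- Real matrix power via functional calculus (`Real.rpow`, so negative powers of
positive semidefinite matrices are taken on the support). -/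
def mpow {n : ℕ} (X : Matrix (Fin n) (Fin n) ℂ) (a : ℝ) : Matrix (Fin n) (Fin n) ℂ :=
  cfc (fun x : ℝ => x ^ a) X

/-!
Write `f t = Tr (A (B + t)⁻¹)^α`. Klein's inequality bounds the difference quotients of `f` from
both sides by quantities with a common limit, which gives `f' t = -α Tr (B + t)⁻¹ (A (B + t)⁻¹)^α`
without differentiating the matrix power itself. To apply it, factor `A = Lᴴ L` and replace
`(B + t)^{-1/2} A (B + t)^{-1/2}` by `L (B + t)⁻¹ Lᴴ`, which has the same nonzero spectrum and is
a smooth function of `t`. Since `B (B + t)⁻¹ = 1 - t (B + t)⁻¹`, the left integrand equals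
`f t + t f' t / α`, and integrating `t f' t` by parts turns its integral into `(1 - 1/α) ∫ f`;
the boundary terms vanish because `f t = O(t^{-α})` with `α > 1`.
-/

section HermitianTrace

open Set Filter Topology
open scoped MatrixOrder Matrix.Norms.L2Operator

variable {𝕜 ι : Type*} [RCLike 𝕜]

lemma posDef_add_smul_one [DecidableEq ι] {B : Matrix ι ι 𝕜} {t : ℝ} (hB : B.PosDef) (ht : 0 ≤ t) :
    (B + t • 1).PosDef :=
  hB.add_posSemidef (PosSemidef.one.smul ht)

variable [Fintype ι] {X Y : Matrix ι ι 𝕜}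

lemma re_trace_nonneg (hX : X.PosSemidef) : 0 ≤ RCLike.re X.trace :=
  (RCLike.nonneg_iff.1 hX.trace_nonneg).1

lemma re_trace_mul_nonneg (hX : X.PosSemidef) (hY : Y.PosSemidef) :
    0 ≤ RCLike.re (X * Y).trace := by
  classical
  obtain ⟨L, rfl⟩ := CStarAlgebra.nonneg_iff_eq_star_mul_self.1 hX.nonneg
  rw [mul_assoc, trace_mul_comm]
  exact re_trace_nonneg (hY.mul_mul_conjTranspose_same L)

variable [DecidableEq ι]

/-- The operator norm on matrices over `𝕜`, as a normed algebra over `ℝ` whose scalar action is the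
entrywise one; `NormedAlgebra.restrictScalars` would only provide a propositionally equal action. -/
local instance normedAlgebraRealL2Op : NormedAlgebra ℝ (Matrix ι ι 𝕜) where
  norm_smul_le r X := by rw [RCLike.real_smul_eq_coe_smul (K := 𝕜), norm_smul, RCLike.norm_ofReal,
    Real.norm_eq_abs]

section FunctionalCalculus

lemma continuousOn_spectrum_real (f : ℝ → ℝ) (X : Matrix ι ι 𝕜) :
    ContinuousOn f (spectrum ℝ X) :=
  X.finite_real_spectrum.continuousOn f

lemma spectrum_real_subset_Ici_zero (hX : X.PosSemidef) : spectrum ℝ X ⊆ Ici 0 :=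
  fun _ hx => spectrum_nonneg_of_nonneg hX.nonneg hx

lemma posSemidef_cfc {f : ℝ → ℝ} (hf : ∀ x ∈ spectrum ℝ X, 0 ≤ f x) : (cfc f X).PosSemidef :=
  nonneg_iff_posSemidef.1 (cfc_nonneg hf)

lemma cfc_id_mul (f : ℝ → ℝ) (hX : X.IsHermitian) :
    cfc (fun x => x * f x) X = X * cfc f X := by
  rw [cfc_mul _ _ X (continuousOn_spectrum_real _ X) (continuousOn_spectrum_real _ X),
    cfc_id' ℝ X hX.isSelfAdjoint]

lemma re_trace_cfc (f : ℝ → ℝ) (hX : X.IsHermitian) :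
    RCLike.re (cfc f X).trace = ∑ i, f (hX.eigenvalues i) := by
  rw [hX.cfc_eq, IsHermitian.cfc, Unitary.conjStarAlgAut_apply, trace_mul_cycle]
  simp [trace]

lemma re_trace_rpow_le {α : ℝ} (hα : 0 ≤ α) (hX : X.PosSemidef) :
    RCLike.re (cfc (fun x : ℝ => x ^ α) X).trace ≤ Fintype.card ι * RCLike.re X.trace ^ α := by
  have trace_eq : RCLike.re X.trace = ∑ i, hX.1.eigenvalues i := by
    simpa [cfc_id' ℝ X hX.1.isSelfAdjoint] using re_trace_cfc (fun x => x) hX.1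
  have eigenvalue_le (i : ι) : hX.1.eigenvalues i ≤ RCLike.re X.trace :=
    trace_eq ▸ Finset.single_le_sum (fun j _ => hX.eigenvalues_nonneg j) (Finset.mem_univ i)
  rw [re_trace_cfc _ hX.1]
  refine (Finset.sum_le_card_nsmul _ _ (RCLike.re X.trace ^ α) fun i _ => ?_).trans_eq (by simp)
  exact Real.rpow_le_rpow (hX.eigenvalues_nonneg i) (eigenvalue_le i) hα

end FunctionalCalculus

section Klein

/-- The squared modulus `|⟨uᵢ, vⱼ⟩|²` of the inner product of the `i`-th eigenvector of `X` with the
`j`-th eigenvector of `Y`; these are the weights in the expansion of `tr (f(X) g(Y))` over pairs of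
eigenvalues. -/
def spectralOverlap (hX : X.IsHermitian) (hY : Y.IsHermitian) (i j : ι) : ℝ :=
  ‖(star (hX.eigenvectorUnitary : Matrix ι ι 𝕜) * hY.eigenvectorUnitary) i j‖ ^ 2

lemma re_trace_diagonal_mul_mul_diagonal_mul (a b : ι → ℝ) (W : Matrix ι ι 𝕜) :
    RCLike.re (Matrix.diagonal (RCLike.ofReal ∘ a) * W *
        Matrix.diagonal (RCLike.ofReal ∘ b) * Wᴴ).trace =
      ∑ i, ∑ j, ‖W i j‖ ^ 2 * (a i * b j) := by
  rw [trace, map_sum]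
  refine Finset.sum_congr rfl fun i _ => ?_
  rw [diag_apply, mul_apply, map_sum]
  refine Finset.sum_congr rfl fun j _ => ?_
  rw [mul_diagonal, diagonal_mul, conjTranspose_apply]
  calc RCLike.re ((a i : 𝕜) * W i j * (b j : 𝕜) * star (W i j))
      = RCLike.re ((a i : 𝕜) * (b j : 𝕜) * (W i j * star (W i j))) := by ring_nf
    _ = ‖W i j‖ ^ 2 * (a i * b j) := by
        rw [RCLike.star_def, RCLike.mul_conj]
        norm_cast
        ring

lemma re_trace_cfc_mul_cfc (f g : ℝ → ℝ) (hX : X.IsHermitian) (hY : Y.IsHermitian) :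
    RCLike.re (cfc f X * cfc g Y).trace =
      ∑ i, ∑ j, spectralOverlap hX hY i j * (f (hX.eigenvalues i) * g (hY.eigenvalues j)) := by
  rw [hX.cfc_eq, hY.cfc_eq, IsHermitian.cfc, IsHermitian.cfc, Unitary.conjStarAlgAut_apply,
    Unitary.conjStarAlgAut_apply, mul_assoc, mul_assoc, trace_mul_comm]
  refine Eq.trans ?_
    (re_trace_diagonal_mul_mul_diagonal_mul (f ∘ hX.eigenvalues) (g ∘ hY.eigenvalues) _)
  simp only [← Function.comp_assoc, ← star_eq_conjTranspose, star_mul, star_star, mul_assoc]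

lemma mul_sub_le_sub_of_convexOn {s : Set ℝ} {f : ℝ → ℝ} {f' x y : ℝ} (hf : ConvexOn ℝ s f)
    (hx : x ∈ s) (hy : y ∈ s) (hf' : HasDerivWithinAt f f' s y) : f' * (x - y) ≤ f x - f y := by
  rcases lt_trichotomy x y with hxy | rfl | hyx
  · have := hf.slope_le_of_hasDerivWithinAt hx hy hxy hf'
    rw [slope_def_field, div_le_iff₀ (sub_pos.2 hxy)] at this
    linarith
  · simp
  · have := hf.le_slope_of_hasDerivWithinAt hy hx hyx hf'
    rwa [slope_def_field, le_div_iff₀ (sub_pos.2 hyx)] at this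

lemma klein_inequality {I : Set ℝ} {f f' : ℝ → ℝ} (hf : ConvexOn ℝ I f)
    (hf' : ∀ x ∈ I, HasDerivWithinAt f (f' x) I x) (hX : X.IsHermitian) (hY : Y.IsHermitian)
    (hXI : spectrum ℝ X ⊆ I) (hYI : spectrum ℝ Y ⊆ I) :
    RCLike.re (cfc f' Y * (X - Y)).trace ≤
      RCLike.re (cfc f X).trace - RCLike.re (cfc f Y).trace := by
  have expand_fX := re_trace_cfc_mul_cfc f (fun _ => 1) hX hY
  have expand_fY := re_trace_cfc_mul_cfc (fun _ => 1) f hX hY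
  have expand_X := re_trace_cfc_mul_cfc (fun x => x) f' hX hY
  have expand_Y := re_trace_cfc_mul_cfc (fun _ => 1) (fun y => y * f' y) hX hY
  rw [cfc_const_one ℝ Y hY.isSelfAdjoint, mul_one] at expand_fX
  rw [cfc_const_one ℝ X hX.isSelfAdjoint, one_mul] at expand_fY expand_Y
  rw [cfc_id' ℝ X hX.isSelfAdjoint] at expand_X
  rw [cfc_id_mul f' hY] at expand_Y
  rw [trace_mul_comm, sub_mul, trace_sub, map_sub, expand_fX, expand_fY, expand_X, expand_Y]
  simp only [← Finset.sum_sub_distrib, ← mul_sub]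
  refine Finset.sum_le_sum fun i _ => Finset.sum_le_sum fun j _ =>
    mul_le_mul_of_nonneg_left ?_ (sq_nonneg _)
  have hj := hYI (hY.eigenvalues_mem_spectrum_real j)
  linarith [mul_sub_le_sub_of_convexOn hf (hXI (hX.eigenvalues_mem_spectrum_real i)) hj (hf' _ hj)]

end Klein

section Derivative

lemma continuousWithinAt_cfc_of_isClosed {E : Type*} [TopologicalSpace E] {I : Set ℝ} {f : ℝ → ℝ}
    {X : E → Matrix ι ι 𝕜} {S : Set E} {t : E} (hI : IsClosed I) (hf : ContinuousOn f I)
    (hX : ∀ s ∈ S, (X s).IsHermitian) (hXI : ∀ s ∈ S, spectrum ℝ (X s) ⊆ I) (ht : t ∈ S)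
    (hXt : ContinuousWithinAt X S t) : ContinuousWithinAt (fun s => cfc f (X s)) S t := by
  set r : ℝ := (‖X t‖ + 1) * ‖(1 : Matrix ι ι 𝕜)‖
  have norm_le : ∀ᶠ s in 𝓝[S] t, ‖X s‖ ≤ ‖X t‖ + 1 :=
    hXt.norm.eventually_le_const (lt_add_one _)
  refine ContinuousWithinAt.cfc ((isCompact_closedBall 0 r).inter_left hI) f ht hXt ?_ ?_
    (hf.mono inter_subset_left)
  · filter_upwards [norm_le, self_mem_nhdsWithin] with s hs hsS x hx
    refine ⟨hXI s hsS hx, mem_closedBall_zero_iff.2 ?_⟩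
    exact (spectrum.norm_le_norm_mul_of_mem hx).trans
      (mul_le_mul_of_nonneg_right hs (norm_nonneg _))
  · filter_upwards [self_mem_nhdsWithin] with s hs using (hX s hs).isSelfAdjoint

lemma hasDerivWithinAt_of_sub_mul_le_of_le_sub_mul {F a b : ℝ → ℝ} {L t : ℝ} {S : Set ℝ}
    (ha : Tendsto a (𝓝[S \ {t}] t) (𝓝 L)) (hb : Tendsto b (𝓝[S \ {t}] t) (𝓝 L))
    (ha_le : ∀ s ∈ S, (s - t) * a s ≤ F s - F t) (hle_b : ∀ s ∈ S, F s - F t ≤ (s - t) * b s) :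
    HasDerivWithinAt F L S t := by
  rw [hasDerivWithinAt_iff_tendsto_slope]
  have hmin := ha.min hb
  have hmax := ha.max hb
  rw [min_self] at hmin
  rw [max_self] at hmax
  have slope_mem (s : ℝ) (hs : s ∈ S \ {t}) :
      min (a s) (b s) ≤ slope F t s ∧ slope F t s ≤ max (a s) (b s) := by
    obtain ⟨hsS, hst⟩ := hs
    have hle := ha_le s hsS
    have hge := hle_b s hsS
    rw [slope_def_field, min_le_iff, le_max_iff]
    rcases lt_or_gt_of_ne hst with h | h
    · simp only [le_div_iff_of_neg' (sub_neg.2 h), div_le_iff_of_neg' (sub_neg.2 h)]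
      exact ⟨Or.inr hge, Or.inl hle⟩
    · simp only [le_div_iff₀' (sub_pos.2 h), div_le_iff₀' (sub_pos.2 h)]
      exact ⟨Or.inl hle, Or.inr hge⟩
  exact tendsto_of_tendsto_of_tendsto_of_le_of_le' hmin hmax
    (eventually_mem_nhdsWithin.mono fun s hs => (slope_mem s hs).1)
    (eventually_mem_nhdsWithin.mono fun s hs => (slope_mem s hs).2)

lemma re_trace_mul_sub_eq (X : ℝ → Matrix ι ι 𝕜) (G : Matrix ι ι 𝕜) (s t : ℝ) :
    RCLike.re (G * (X s - X t)).trace = (s - t) * RCLike.re (G * slope X t s).trace := by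
  rw [← vsub_eq_sub, ← sub_smul_slope X t s, mul_smul_comm, trace_smul, RCLike.smul_re]

lemma hasDerivWithinAt_re_trace_cfc {I : Set ℝ} {f f' : ℝ → ℝ} {X : ℝ → Matrix ι ι 𝕜}
    {X' : Matrix ι ι 𝕜} {S : Set ℝ} {t : ℝ} (hI : IsClosed I) (hf : ConvexOn ℝ I f)
    (hf' : ∀ x ∈ I, HasDerivWithinAt f (f' x) I x) (hf'_cont : ContinuousOn f' I)
    (hX : ∀ s ∈ S, (X s).IsHermitian) (hXI : ∀ s ∈ S, spectrum ℝ (X s) ⊆ I) (ht : t ∈ S)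
    (hXt : HasDerivWithinAt X X' S t) :
    HasDerivWithinAt (fun s => RCLike.re (cfc f (X s)).trace)
      (RCLike.re (cfc f' (X t) * X').trace) S t := by
  have slope_tendsto : Tendsto (slope X t) (𝓝[S \ {t}] t) (𝓝 X') :=
    hasDerivWithinAt_iff_tendsto_slope.1 hXt
  have cfc_tendsto : Tendsto (fun s => cfc f' (X s)) (𝓝[S \ {t}] t) (𝓝 (cfc f' (X t))) :=
    (continuousWithinAt_cfc_of_isClosed hI hf'_cont hX hXI ht hXt.continuousWithinAt).mono_left
      (nhdsWithin_mono t sdiff_subset)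
  have continuous_re_trace : Continuous fun M : Matrix ι ι 𝕜 => RCLike.re M.trace :=
    RCLike.continuous_re.comp continuous_id.matrix_trace
  refine hasDerivWithinAt_of_sub_mul_le_of_le_sub_mul
    (a := fun s => RCLike.re (cfc f' (X t) * slope X t s).trace)
    (b := fun s => RCLike.re (cfc f' (X s) * slope X t s).trace)
    ((continuous_re_trace.tendsto _).comp (slope_tendsto.const_mul _))
    ((continuous_re_trace.tendsto _).comp (cfc_tendsto.mul slope_tendsto))
    (fun s hs => ?_) (fun s hs => ?_)
  · rw [← re_trace_mul_sub_eq]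
    exact klein_inequality hf hf' (hX s hs) (hX t ht) (hXI s hs) (hXI t ht)
  · rw [← re_trace_mul_sub_eq, ← neg_sub (X t), mul_neg, trace_neg, map_neg, ← neg_sub,
      neg_le_neg_iff]
    exact klein_inequality hf hf' (hX t ht) (hX s hs) (hXI t ht) (hXI s hs)

lemma hasDerivAt_inv_add_smul_one {B : Matrix ι ι 𝕜} {t : ℝ} (h : IsUnit (B + t • 1)) :
    HasDerivAt (fun s : ℝ => (B + s • (1 : Matrix ι ι 𝕜))⁻¹)
      (-((B + t • 1)⁻¹ * (B + t • 1)⁻¹)) t := by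
  have shift : HasDerivAt (fun s : ℝ => B + s • (1 : Matrix ι ι 𝕜)) 1 t := by
    simpa using ((hasDerivAt_id t).smul_const (1 : Matrix ι ι 𝕜)).const_add B
  obtain ⟨u, hu⟩ := h
  have inverse := hasFDerivAt_ringInverse (𝕜 := ℝ) u
  rw [hu] at inverse
  simp only [nonsing_inv_eq_ringInverse, ← hu, Ring.inverse_unit]
  simpa [Function.comp_def] using inverse.comp_hasDerivAt t shift

end Derivative

section Rectangular

variable {κ : Type*} [Fintype κ] [DecidableEq κ]

lemma cfc_mul_conjTranspose_self_mul (g : ℝ → ℝ) (X : Matrix κ ι 𝕜) :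
    cfc g (X * Xᴴ) * X = X * cfc g (Xᴴ * X) := by
  -- `g` agrees with one polynomial on both spectra, so only powers have to be checked.
  let nodes : Finset ℝ :=
    (finite_real_spectrum (A := X * Xᴴ)).toFinset ∪ (finite_real_spectrum (A := Xᴴ * X)).toFinset
  let p : Polynomial ℝ := Lagrange.interpolate nodes id g
  have eval_eq (x : ℝ) (hx : x ∈ nodes) : g x = p.eval x :=
    (Lagrange.eval_interpolate_at_node (v := id) g (injOn_id _) hx).symm
  have pow_mul (k : ℕ) : (X * Xᴴ) ^ k * X = X * (Xᴴ * X) ^ k := by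
    induction k with
    | zero => simp
    | succ k ih => rw [pow_succ', pow_succ', Matrix.mul_assoc, ih]; simp only [Matrix.mul_assoc]
  rw [cfc_congr fun x hx => eval_eq x (by simp [nodes, hx]),
    cfc_congr (a := Xᴴ * X) fun x hx => eval_eq x (by simp [nodes, hx]),
    cfc_polynomial p _ (isHermitian_mul_conjTranspose_self X).isSelfAdjoint,
    cfc_polynomial p _ (isHermitian_conjTranspose_mul_self X).isSelfAdjoint]
  simp only [Polynomial.aeval_eq_sum_range, Matrix.sum_mul, Matrix.mul_sum, Matrix.smul_mul,
    Matrix.mul_smul, pow_mul]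

lemma trace_cfc_mul_conjTranspose_self_mul (g : ℝ → ℝ) (X : Matrix κ ι 𝕜) (T : Matrix ι ι 𝕜) :
    (cfc g (X * Xᴴ) * (X * T * Xᴴ)).trace = (T * cfc (fun x => x * g x) (Xᴴ * X)).trace := by
  calc (cfc g (X * Xᴴ) * (X * T * Xᴴ)).trace
      = (cfc g (X * Xᴴ) * X * (T * Xᴴ)).trace := by simp only [Matrix.mul_assoc]
    _ = (X * (cfc g (Xᴴ * X) * (T * Xᴴ))).trace := by
        rw [cfc_mul_conjTranspose_self_mul, Matrix.mul_assoc]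
    _ = (T * (Xᴴ * X * cfc g (Xᴴ * X))).trace := by
        rw [trace_mul_comm, Matrix.mul_assoc, Matrix.mul_assoc, trace_mul_comm]
        simp only [Matrix.mul_assoc]
    _ = (T * cfc (fun x => x * g x) (Xᴴ * X)).trace := by
        rw [cfc_id_mul g (isHermitian_conjTranspose_mul_self X)]

lemma trace_cfc_mul_conjTranspose_self {f : ℝ → ℝ} (hf : f 0 = 0) (X : Matrix κ ι 𝕜) :
    (cfc f (X * Xᴴ)).trace = (cfc f (Xᴴ * X)).trace := by
  have mul_div (x : ℝ) : x * (f x / x) = f x := mul_div_cancel_of_imp' fun hx => hx ▸ hf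
  have := trace_cfc_mul_conjTranspose_self_mul (fun x => f x / x) X 1
  rw [Matrix.mul_one, one_mul, trace_mul_comm,
    ← cfc_id_mul _ (isHermitian_mul_conjTranspose_self X)] at this
  simpa only [mul_div] using this

end Rectangular

section SymmetrizedQuotient

/-- `C^{-1/2}`, for positive definite `C`. -/
def invSqrt (C : Matrix ι ι 𝕜) : Matrix ι ι 𝕜 :=
  cfc (fun x : ℝ => x ^ (-(1 / 2) : ℝ)) C

/-- The Hermitian matrix `C^{-1/2} A C^{-1/2}`, which is similar to `A C⁻¹`; the trace of a function
of `A C⁻¹` is understood as the trace of that function of `symmQuot A C`. -/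
def symmQuot (A C : Matrix ι ι 𝕜) : Matrix ι ι 𝕜 :=
  invSqrt C * A * invSqrt C

variable {A B C : Matrix ι ι 𝕜} {t : ℝ}

lemma conjTranspose_invSqrt (C : Matrix ι ι 𝕜) : (invSqrt C)ᴴ = invSqrt C :=
  (cfc_predicate _ C : IsSelfAdjoint (invSqrt C))

lemma invSqrt_mul_invSqrt (hC : C.PosDef) : invSqrt C * invSqrt C = C⁻¹ := by
  refine (inv_eq_right_inv ?_).symm
  rw [invSqrt, ← cfc_mul _ _ C (continuousOn_spectrum_real _ C) (continuousOn_spectrum_real _ C),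
    ← cfc_id_mul _ hC.1, ← cfc_one ℝ C hC.1.isSelfAdjoint]
  refine cfc_congr fun x hx => ?_
  have hx : 0 < x := hC.isStrictlyPositive.spectrum_pos hx
  rw [← Real.rpow_add hx]
  norm_num [Real.rpow_neg_one, hx.ne']

lemma symmQuot_self (hC : C.PosDef) : symmQuot C C = 1 := by
  have commute : Commute (invSqrt C) C := by
    simpa only [invSqrt, cfc_id ℝ C hC.1.isSelfAdjoint] using
      cfc_commute_cfc (fun x : ℝ => x ^ (-(1 / 2) : ℝ)) id C
  rw [symmQuot, commute.eq, mul_assoc, invSqrt_mul_invSqrt hC,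
    mul_nonsing_inv _ ((isUnit_iff_isUnit_det C).1 hC.isUnit)]

lemma symmQuot_add_smul_one (h : (B + t • 1).PosDef) :
    symmQuot B (B + t • 1) = 1 - t • (B + t • 1)⁻¹ := by
  have expand (C : Matrix ι ι 𝕜) :
      symmQuot (B + t • 1) C = symmQuot B C + t • (invSqrt C * invSqrt C) := by
    simp only [symmQuot, mul_add, add_mul, mul_smul_comm, smul_mul_assoc, mul_one]
  rw [eq_sub_iff_add_eq, ← invSqrt_mul_invSqrt h, ← expand, symmQuot_self h]

lemma posSemidef_symmQuot (hA : A.PosSemidef) : (symmQuot A C).PosSemidef := by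
  simpa only [symmQuot, conjTranspose_invSqrt] using hA.mul_mul_conjTranspose_same (invSqrt C)

lemma trace_symmQuot (hC : C.PosDef) : (symmQuot A C).trace = (A * C⁻¹).trace := by
  rw [symmQuot, mul_assoc, trace_mul_comm, mul_assoc, invSqrt_mul_invSqrt hC]

lemma trace_symmQuot_add_smul_one_mul (h : (B + t • 1).PosDef) (P : Matrix ι ι 𝕜) :
    RCLike.re (symmQuot B (B + t • 1) * P).trace =
      RCLike.re P.trace - t * RCLike.re ((B + t • 1)⁻¹ * P).trace := by
  rw [symmQuot_add_smul_one h, sub_mul, one_mul, trace_sub, map_sub, smul_mul_assoc, trace_smul,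
    RCLike.smul_re]

lemma mul_re_trace_symmQuot_le (hA : A.PosSemidef) (hB : B.PosDef) (ht : 0 ≤ t) :
    t * RCLike.re (symmQuot A (B + t • 1)).trace ≤ RCLike.re A.trace := by
  have hC := posDef_add_smul_one hB ht
  have nonneg := re_trace_mul_nonneg (posSemidef_symmQuot (C := B + t • 1) hB.posSemidef) hA
  rw [trace_symmQuot_add_smul_one_mul hC] at nonneg
  rw [trace_symmQuot hC, trace_mul_comm]
  linarith

lemma isBigO_re_trace_rpow_symmQuot {α : ℝ} (hα : 0 ≤ α) (hA : A.PosSemidef) (hB : B.PosDef) :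
    (fun t : ℝ => RCLike.re (cfc (fun x : ℝ => x ^ α) (symmQuot A (B + t • 1))).trace)
      =O[atTop] fun t => t ^ (-α) := by
  refine Asymptotics.IsBigO.of_bound (Fintype.card ι * RCLike.re A.trace ^ α) ?_
  filter_upwards [eventually_gt_atTop 0] with t ht
  have hQ : (symmQuot A (B + t • 1)).PosSemidef := posSemidef_symmQuot hA
  have pow_psd : (cfc (fun x : ℝ => x ^ α) (symmQuot A (B + t • 1))).PosSemidef :=
    posSemidef_cfc fun x hx => Real.rpow_nonneg (spectrum_real_subset_Ici_zero hQ hx) α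
  have trace_le : RCLike.re (symmQuot A (B + t • 1)).trace ≤ RCLike.re A.trace / t := by
    rw [le_div_iff₀' ht]
    exact mul_re_trace_symmQuot_le hA hB ht.le
  rw [Real.norm_of_nonneg (re_trace_nonneg pow_psd), Real.norm_of_nonneg (by positivity)]
  calc RCLike.re (cfc (fun x : ℝ => x ^ α) (symmQuot A (B + t • 1))).trace
      ≤ Fintype.card ι * RCLike.re (symmQuot A (B + t • 1)).trace ^ α := re_trace_rpow_le hα hQ
    _ ≤ Fintype.card ι * (RCLike.re A.trace / t) ^ α := by
        have := re_trace_nonneg hQ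
        gcongr
    _ = Fintype.card ι * RCLike.re A.trace ^ α * t ^ (-α) := by
        rw [Real.div_rpow (re_trace_nonneg hA) ht.le, Real.rpow_neg ht.le]
        ring

lemma hasDerivWithinAt_re_trace_cfc_symmQuot {f f' : ℝ → ℝ} (hf : ConvexOn ℝ (Ici 0) f)
    (hf' : ∀ x ∈ Ici 0, HasDerivWithinAt f (f' x) (Ici 0) x) (hf'_cont : ContinuousOn f' (Ici 0))
    (hf0 : f 0 = 0) (hA : A.PosSemidef) (hB : B.PosDef) (ht : 0 ≤ t) :
    HasDerivWithinAt (fun s : ℝ => RCLike.re (cfc f (symmQuot A (B + s • 1))).trace)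
      (-RCLike.re ((B + t • 1)⁻¹ * cfc (fun x => x * f' x) (symmQuot A (B + t • 1))).trace)
      (Ici 0) t := by
  obtain ⟨L, rfl⟩ := CStarAlgebra.nonneg_iff_eq_star_mul_self.1 hA.nonneg
  have conj_eq {C : Matrix ι ι 𝕜} (hC : C.PosDef) :
      L * C⁻¹ * Lᴴ = L * invSqrt C * (L * invSqrt C)ᴴ := by
    rw [← invSqrt_mul_invSqrt hC, conjTranspose_mul, conjTranspose_invSqrt]
    simp only [mul_assoc]
  have symmQuot_eq (C : Matrix ι ι 𝕜) :
      symmQuot (star L * L) C = (L * invSqrt C)ᴴ * (L * invSqrt C) := by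
    rw [symmQuot, conjTranspose_mul, conjTranspose_invSqrt, star_eq_conjTranspose]
    simp only [mul_assoc]
  have psd (C : Matrix ι ι 𝕜) (hC : C.PosDef) : (L * C⁻¹ * Lᴴ).PosSemidef :=
    hC.inv.posSemidef.mul_mul_conjTranspose_same L
  have trace_eq (s : ℝ) (hs : s ∈ Ici 0) :
      RCLike.re (cfc f (symmQuot (star L * L) (B + s • 1))).trace =
        RCLike.re (cfc f (L * (B + s • 1)⁻¹ * Lᴴ)).trace := by
    rw [conj_eq (posDef_add_smul_one hB hs), symmQuot_eq, trace_cfc_mul_conjTranspose_self hf0]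
  have hC := posDef_add_smul_one hB ht
  have path := ((hasDerivAt_inv_add_smul_one hC.isUnit).const_mul L).mul_const Lᴴ
  have deriv := hasDerivWithinAt_re_trace_cfc (X := fun s => L * (B + s • 1)⁻¹ * Lᴴ) (S := Ici 0)
    isClosed_Ici hf hf' hf'_cont
    (fun s hs => (psd _ (posDef_add_smul_one hB hs)).1)
    (fun s hs => spectrum_real_subset_Ici_zero (psd _ (posDef_add_smul_one hB hs))) ht
    path.hasDerivWithinAt
  refine (deriv.congr trace_eq (trace_eq t ht)).congr_deriv ?_
  have : L * -((B + t • 1)⁻¹ * (B + t • 1)⁻¹) * Lᴴ =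
      -(L * invSqrt (B + t • 1) * (B + t • 1)⁻¹ * (L * invSqrt (B + t • 1))ᴴ) := by
    rw [← invSqrt_mul_invSqrt hC, conjTranspose_mul, conjTranspose_invSqrt]
    simp only [mul_neg, neg_mul, mul_assoc]
  rw [conj_eq hC, this, mul_neg, trace_neg, map_neg, trace_cfc_mul_conjTranspose_self_mul,
    symmQuot_eq]

end SymmetrizedQuotient

section Scalar

variable {f f' : ℝ → ℝ} {α c : ℝ}

lemma integrableOn_Ioi_of_isBigO_rpow_neg (hα : 1 < α) (hf : ContinuousOn f (Ici 0))
    (hf_decay : f =O[atTop] fun t => t ^ (-α)) : IntegrableOn f (Ioi 0) :=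
  ((hf.locallyIntegrableOn measurableSet_Ici).integrableOn_of_isBigO_atTop hf_decay
    (integrableAtFilter_rpow_atTop_iff.2 (by linarith))).mono_set Ioi_subset_Ici_self

lemma tendsto_id_mul_atTop_of_isBigO_rpow_neg (hα : 1 < α)
    (hf_decay : f =O[atTop] fun t => t ^ (-α)) : Tendsto (fun t => t * f t) atTop (𝓝 0) := by
  have product_decay : (fun t => t * f t) =O[atTop] fun t : ℝ => t ^ (-(α - 1)) := by
    refine ((Asymptotics.isBigO_refl (fun t : ℝ => t) atTop).mul hf_decay).congr' .rfl ?_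
    filter_upwards [eventually_gt_atTop 0] with t ht
    rw [mul_comm, ← Real.rpow_add_one ht.ne']
    ring_nf
  exact product_decay.trans_tendsto (tendsto_rpow_neg_atTop (sub_pos.2 hα))

lemma integrableOn_id_mul_deriv (hf : IntegrableOn f (Ioi 0))
    (hf' : ∀ t ∈ Ioi 0, HasDerivAt f (f' t) t) (hbound : ∀ t ∈ Ioi 0, |t * f' t| ≤ c * f t) :
    IntegrableOn (fun t => t * f' t) (Ioi 0) := by
  refine (hf.const_mul c).mono' ?_ (ae_restrict_of_forall_mem measurableSet_Ioi hbound)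
  refine ((measurable_id.mul (measurable_deriv f)).aestronglyMeasurable).congr ?_
  exact ae_restrict_of_forall_mem measurableSet_Ioi fun t ht => by
    simp only [Pi.mul_apply, id, (hf' t ht).deriv]

lemma integral_Ioi_id_mul_deriv (hf : IntegrableOn f (Ioi 0)) (hf_cont : ContinuousOn f (Ici 0))
    (hf' : ∀ t ∈ Ioi 0, HasDerivAt f (f' t) t)
    (htf' : IntegrableOn (fun t => t * f' t) (Ioi 0))
    (htf : Tendsto (fun t => t * f t) atTop (𝓝 0)) :
    ∫ t in Ioi 0, t * f' t = -∫ t in Ioi 0, f t := by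
  have boundary_zero : Tendsto (fun t => t * f t) (𝓝[>] 0) (𝓝 0) := by
    have : Tendsto (fun t => t * f t) (𝓝[>] 0) (𝓝 (0 * f 0)) :=
      ((continuousOn_id.mul hf_cont) 0 (mem_Ici.2 le_rfl)).mono_left
        (nhdsWithin_mono 0 Ioi_subset_Ici_self)
    rwa [zero_mul] at this
  have := integral_Ioi_mul_deriv_eq_deriv_mul (u := id) (u' := 1) (fun t _ => hasDerivAt_id t) hf'
    htf' (by simpa using hf) boundary_zero htf
  simpa using this

lemma integral_Ioi_sub_id_mul {q : ℝ → ℝ} (hα : 1 < α)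
    (hf : ∀ t, 0 ≤ t → HasDerivWithinAt f (-(α * q t)) (Ici 0) t)
    (hf_decay : f =O[atTop] fun t => t ^ (-α)) (hq : ∀ t ∈ Ioi 0, |t * q t| ≤ f t) :
    ∫ t in Ioi 0, (f t - t * q t) = ((α - 1) / α) * ∫ t in Ioi 0, f t := by
  have f_cont : ContinuousOn f (Ici 0) := fun t ht => (hf t ht).continuousWithinAt
  have f_deriv (t : ℝ) (ht : t ∈ Ioi 0) : HasDerivAt f (-(α * q t)) t :=
    (hf t (mem_Ioi.1 ht).le).hasDerivAt (Ici_mem_nhds ht)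
  have f_int : IntegrableOn f (Ioi 0) := integrableOn_Ioi_of_isBigO_rpow_neg hα f_cont hf_decay
  have deriv_int : IntegrableOn (fun t => t * -(α * q t)) (Ioi 0) := by
    refine integrableOn_id_mul_deriv f_int f_deriv (c := α) fun t ht => ?_
    rw [mul_neg, mul_left_comm, abs_neg, abs_mul, abs_of_pos (by linarith)]
    exact mul_le_mul_of_nonneg_left (hq t ht) (by linarith)
  calc ∫ t in Ioi 0, (f t - t * q t)
      = ∫ t in Ioi 0, (f t + α⁻¹ * (t * -(α * q t))) := by
        refine integral_congr_ae (.of_forall fun t => ?_)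
        field_simp
        ring
    _ = (∫ t in Ioi 0, f t) + α⁻¹ * -∫ t in Ioi 0, f t := by
        rw [integral_add f_int (deriv_int.const_mul _), integral_const_mul,
          integral_Ioi_id_mul_deriv f_int f_cont f_deriv deriv_int
            (tendsto_id_mul_atTop_of_isBigO_rpow_neg hα hf_decay)]
    _ = ((α - 1) / α) * ∫ t in Ioi 0, f t := by
        field_simp
        ring

end Scalar

section Main

variable {α t : ℝ} {A B : Matrix ι ι 𝕜}

lemma hasDerivWithinAt_re_trace_rpow_symmQuot (hα : 1 ≤ α) (hA : A.PosSemidef) (hB : B.PosDef)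
    (ht : 0 ≤ t) :
    HasDerivWithinAt
      (fun s : ℝ => RCLike.re (cfc (fun x : ℝ => x ^ α) (symmQuot A (B + s • 1))).trace)
      (-(α * RCLike.re
        ((B + t • 1)⁻¹ * cfc (fun x : ℝ => x ^ α) (symmQuot A (B + t • 1))).trace)) (Ici 0) t := by
  have hQ : (symmQuot A (B + t • 1)).PosSemidef := posSemidef_symmQuot hA
  have id_mul_deriv : cfc (fun x : ℝ => x * (α * x ^ (α - 1))) (symmQuot A (B + t • 1)) =
      α • cfc (fun x : ℝ => x ^ α) (symmQuot A (B + t • 1)) := by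
    rw [← cfc_const_mul α _ _ (continuousOn_spectrum_real _ _)]
    refine cfc_congr fun x hx => ?_
    have := Real.rpow_add_one' (x := x) (y := α - 1) (spectrum_real_subset_Ici_zero hQ hx)
      (by linarith)
    rw [sub_add_cancel] at this
    rw [this]
    ring
  refine (hasDerivWithinAt_re_trace_cfc_symmQuot (convexOn_rpow hα)
    (fun x _ => (Real.hasDerivAt_rpow_const (Or.inr hα)).hasDerivWithinAt) ?_
    (Real.zero_rpow (by linarith)) hA hB ht).congr_deriv ?_
  · exact (continuous_const.mul (Real.continuous_rpow_const (sub_nonneg.2 hα))).continuousOn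
  · rw [id_mul_deriv, mul_smul_comm, trace_smul, RCLike.smul_re]

theorem integral_trace_weighted_pow_general (hA : A.PosSemidef) (hB : B.PosDef) (hα : 1 < α) :
    ∫ t in Ioi (0 : ℝ), RCLike.re (symmQuot B (B + t • 1) *
        cfc (fun x : ℝ => x ^ α) (symmQuot A (B + t • 1))).trace =
      ((α - 1) / α) * ∫ t in Ioi (0 : ℝ),
        RCLike.re (cfc (fun x : ℝ => x ^ α) (symmQuot A (B + t • 1))).trace := by
  set P : ℝ → Matrix ι ι 𝕜 := fun t => cfc (fun x : ℝ => x ^ α) (symmQuot A (B + t • 1))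
  set f : ℝ → ℝ := fun t => RCLike.re (P t).trace
  set q : ℝ → ℝ := fun t => RCLike.re ((B + t • 1)⁻¹ * P t).trace
  have hP (t : ℝ) : (P t).PosSemidef := posSemidef_cfc fun x hx =>
    Real.rpow_nonneg (spectrum_real_subset_Ici_zero (posSemidef_symmQuot hA) hx) α
  have weighted_eq (t : ℝ) (ht : 0 ≤ t) :
      RCLike.re (symmQuot B (B + t • 1) * P t).trace = f t - t * q t :=
    trace_symmQuot_add_smul_one_mul (posDef_add_smul_one hB ht) (P t)
  have f_deriv (t : ℝ) (ht : 0 ≤ t) : HasDerivWithinAt f (-(α * q t)) (Ici 0) t :=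
    hasDerivWithinAt_re_trace_rpow_symmQuot hα.le hA hB ht
  have f_decay : f =O[atTop] fun t => t ^ (-α) := isBigO_re_trace_rpow_symmQuot (by linarith) hA hB
  have bound (t : ℝ) (ht : t ∈ Ioi 0) : |t * q t| ≤ f t := by
    have ht : 0 < t := ht
    have q_nonneg : 0 ≤ q t :=
      re_trace_mul_nonneg (posDef_add_smul_one hB ht.le).inv.posSemidef (hP t)
    have weighted_nonneg : 0 ≤ f t - t * q t :=
      weighted_eq t ht.le ▸ re_trace_mul_nonneg (posSemidef_symmQuot hB.posSemidef) (hP t)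
    rw [abs_of_nonneg (by positivity)]
    linarith
  calc ∫ t in Ioi (0 : ℝ), RCLike.re (symmQuot B (B + t • 1) * P t).trace
      = ∫ t in Ioi (0 : ℝ), (f t - t * q t) :=
        setIntegral_congr_fun measurableSet_Ioi fun t ht => weighted_eq t (mem_Ioi.1 ht).le
    _ = ((α - 1) / α) * ∫ t in Ioi (0 : ℝ), f t :=
        integral_Ioi_sub_id_mul hα f_deriv f_decay bound

end Main

end HermitianTrace

/-- for `A ⪰ 0`, `B ≻ 0` and `α > 1`, writing
`S t = (B + t·1)^{-1/2}` and interpreting `Tr[(A(B+t·1)⁻¹)^α] = Tr[(S t · A · S t)^α]`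
and `Tr[B(B+t·1)⁻¹(A(B+t·1)⁻¹)^α] = Tr[S t · B · S t · (S t · A · S t)^α]`, we have
`∫₀^∞ Tr[B(B+t)⁻¹(A(B+t)⁻¹)^α] dt = ((α-1)/α) ∫₀^∞ Tr[(A(B+t)⁻¹)^α] dt`. -/
theorem integral_trace_weighted_pow {n : ℕ} (A B : Matrix (Fin n) (Fin n) ℂ)
    (hA : A.PosSemidef) (hB : B.PosDef) (α : ℝ) (hα : 1 < α) :
    ∫ t in Set.Ioi (0:ℝ),
        (Matrix.trace (mpow (B + t • 1) (-(1/2)) * B * mpow (B + t • 1) (-(1/2)) *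
          mpow (mpow (B + t • 1) (-(1/2)) * A * mpow (B + t • 1) (-(1/2))) α)).re
      = ((α - 1) / α) *
        ∫ t in Set.Ioi (0:ℝ),
          (Matrix.trace
            (mpow (mpow (B + t • 1) (-(1/2)) * A * mpow (B + t • 1) (-(1/2))) α)).re :=
  integral_trace_weighted_pow_general hA hB hα
end
end

section
/- Let ρ, σ be density matrices with the support of ρ contained in the support of σ, and α > 1. Then the Hellinger divergence H_α(ρ‖σ) defined by (α-1)H_α(ρ‖σ) + 1 = α ∫₀^∞ γ^{α-1} Tr[σ {ρ > γσ}] dγ satisfies H_α(ρ‖σ) = -1/(α-1) + ∫₀^∞ Tr[((σ + t·1)^{-1/2} ρ (σ + t·1)^{-1/2})^α] dt. -/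
open MeasureTheory Matrix
open scoped ComplexOrder
noncomputable section

/-!
Write `A₊` for the positive part of a Hermitian matrix. By Sylvester's law of inertia, conjugating
by `(σ + t)^{-1/2}` shows that `(σ + t)^{-1/2} ρ (σ + t)^{-1/2} - γ` and `ρ - γσ - γt` have positive
parts of the same rank, say `N(γ, t)`. As `rank (A - s)₊` counts the eigenvalues of `A` above `s`,
layer-cake formulas identify the integral of `α γ^{α-1} N(γ, t)` over `γ` with
`Tr[((σ + t)^{-1/2} ρ (σ + t)^{-1/2})^α]`, and the integral of `N(γ, t)` over `t` with
`γ⁻¹ Tr (ρ - γσ)₊`. Tonelli's theorem therefore gives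
`∫ Tr[((σ + t)^{-1/2} ρ (σ + t)^{-1/2})^α] dt = α ∫ γ^{α-2} Tr (ρ - γσ)₊ dγ`.
Finally `γ ↦ Tr (ρ - γσ)₊` is convex with subgradient `-Tr[σ{ρ > γσ}]` and, by the support
condition, vanishes for large `γ`, so it is the tail integral of `Tr[σ{ρ > γσ}]`; a further layer
cake turns the right-hand side into `α / (α - 1) ∫ γ^{α-1} Tr[σ{ρ > γσ}] dγ`.
-/

section RankTrace

variable {m n 𝕜 : Type*} [Fintype n] [RCLike 𝕜]

lemma lowerSemicontinuous_rank [Finite m] :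
    LowerSemicontinuous (rank : Matrix m n 𝕜 → ℕ) := by
  classical
  have := Fintype.ofFinite m
  refine lowerSemicontinuous_iff_isOpen_preimage.mpr fun k => ?_
  let toCLM : Matrix m n 𝕜 →ₗ[𝕜] (n → 𝕜) →L[𝕜] (m → 𝕜) :=
    LinearMap.toContinuousLinearMap.toLinearMap ∘ₗ Matrix.toLin'.toLinearMap
  convert (isOpen_setOfPred_nat_le_rank (k + 1)).preimage
    toCLM.continuous_of_finiteDimensional using 1
  ext A
  have hrank : (toCLM A : (n → 𝕜) →ₗ[𝕜] (m → 𝕜)).rank = A.rank :=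
    (Module.finrank_eq_rank 𝕜 A.mulVecLin.range).symm
  change k < A.rank ↔ ((k + 1 : ℕ) : Cardinal) ≤ (toCLM A : (n → 𝕜) →ₗ[𝕜] (m → 𝕜)).rank
  rw [hrank, Nat.cast_le, Nat.lt_iff_add_one_le]

open scoped MatrixOrder

lemma rank_le_rank_of_le {A B : Matrix n n 𝕜} (hA : 0 ≤ A) (hAB : A ≤ B) :
    A.rank ≤ B.rank := by
  have hApsd := nonneg_iff_posSemidef.mp hA
  have hker : B.mulVecLin.ker ≤ A.mulVecLin.ker := by
    intro x (hBx : B *ᵥ x = 0)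
    have hle := (Matrix.le_iff.mp hAB).dotProduct_mulVec_nonneg x
    rw [sub_mulVec, hBx, zero_sub, dotProduct_neg, neg_nonneg] at hle
    exact (hApsd.dotProduct_mulVec_zero_iff x).mp (hle.antisymm (hApsd.dotProduct_mulVec_nonneg x))
  have hfinrank := Submodule.finrank_mono hker
  have hrankA := A.mulVecLin.finrank_range_add_finrank_ker
  have hrankB := B.mulVecLin.finrank_range_add_finrank_ker
  rw [rank, rank]
  lia

lemma trace_mul_nonneg {A B : Matrix n n 𝕜} (hA : A.PosSemidef) (hB : B.PosSemidef) :
    0 ≤ (A * B).trace := by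
  classical
  obtain ⟨C, rfl⟩ := CStarAlgebra.nonneg_iff_eq_star_mul_self.mp hA.nonneg
  rw [trace_mul_comm, ← mul_assoc, trace_mul_comm, ← mul_assoc]
  exact (hB.mul_mul_conjTranspose_same C).trace_nonneg

variable [DecidableEq n] {A : Matrix n n 𝕜}

lemma trace_cfc (hA : A.IsHermitian) (f : ℝ → ℝ) :
    (cfc f A).trace = ((∑ i, f (hA.eigenvalues i) : ℝ) : 𝕜) := by
  rw [hA.cfc_eq, IsHermitian.cfc, Unitary.conjStarAlgAut_apply, trace_mul_cycle,
    Unitary.coe_star_mul_self, one_mul, trace_diagonal]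
  simp

lemma rank_cfc (hA : A.IsHermitian) (f : ℝ → ℝ) :
    (cfc f A).rank = Fintype.card {i // f (hA.eigenvalues i) ≠ 0} := by
  rw [hA.cfc_eq, IsHermitian.cfc, Unitary.conjStarAlgAut_apply, ← Unitary.coe_star,
    rank_mul_eq_left_of_isUnit_det _ _ (UnitaryGroup.det_isUnit _),
    rank_mul_eq_right_of_isUnit_det _ _ (UnitaryGroup.det_isUnit _), rank_diagonal]
  simp only [Function.comp_apply, ne_eq, RCLike.ofReal_eq_zero]

lemma cfc_mul_of_matrix (f g : ℝ → ℝ) (A : Matrix n n 𝕜) :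
    cfc (fun x => f x * g x) A = cfc f A * cfc g A :=
  cfc_mul f g A (finite_real_spectrum.continuousOn f) (finite_real_spectrum.continuousOn g)

end RankTrace

section PosPart

open scoped MatrixOrder

variable {m n : ℕ} {A B : Matrix (Fin n) (Fin n) ℂ}

lemma mposPart_nonneg (A : Matrix (Fin n) (Fin n) ℂ) : 0 ≤ mposPart A :=
  cfc_nonneg fun x _ => le_max_right x 0

lemma projPos_nonneg (A : Matrix (Fin n) (Fin n) ℂ) : 0 ≤ projPos A :=
  cfc_nonneg fun x _ => by split_ifs <;> simp

lemma projPos_le_one (A : Matrix (Fin n) (Fin n) ℂ) : projPos A ≤ 1 :=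
  cfc_le_one _ A fun x _ => by split_ifs <;> simp

lemma le_mposPart (hA : A.IsHermitian) : A ≤ mposPart A := by
  conv_lhs => rw [← cfc_id' ℝ A hA.isSelfAdjoint]
  exact cfc_mono fun x _ => le_max_left x 0

lemma mul_projPos (hA : A.IsHermitian) : A * projPos A = mposPart A := by
  conv_lhs => enter [1]; rw [← cfc_id' ℝ A hA.isSelfAdjoint]
  rw [projPos, ← cfc_mul_of_matrix, mposPart]
  exact cfc_congr fun x _ => by grind

lemma projPos_mul_mposPart (A : Matrix (Fin n) (Fin n) ℂ) :
    projPos A * mposPart A = mposPart A := by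
  rw [projPos, mposPart, ← cfc_mul_of_matrix]
  exact cfc_congr fun x _ => by grind

lemma mposPart_eq_zero_of_nonpos (hA : A ≤ 0) : mposPart A = 0 := by
  have hherm : IsSelfAdjoint A := by
    simpa using (IsSelfAdjoint.of_nonneg (neg_nonneg.mpr hA)).neg
  rw [← cfc_id' ℝ A hherm, cfc_nonpos_iff (fun x => x) A] at hA
  rw [mposPart, ← cfc_const_zero ℝ A]
  exact cfc_congr fun x hx => max_eq_right (hA x hx)

open scoped Matrix.Norms.L2Operator in
lemma continuousOn_mposPart :
    ContinuousOn (mposPart : Matrix (Fin n) (Fin n) ℂ → _) {A | A.IsHermitian} :=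
  ContinuousOn.cfc_of_mem_nhdsSet (s := Set.univ) _ Filter.univ_mem continuousOn_id
    (fun _ hA => hA) (by fun_prop)

lemma re_trace_mul_projPos_le (hA : A.IsHermitian) :
    (A * projPos B).trace.re ≤ (mposPart A).trace.re := by
  have hdominate : 0 ≤ ((mposPart A - A) * projPos B).trace.re :=
    (Complex.le_def.mp (trace_mul_nonneg (Matrix.le_iff.mp (le_mposPart hA))
      (projPos_nonneg B).posSemidef)).1
  have hcontract : 0 ≤ (mposPart A * (1 - projPos B)).trace.re :=
    (Complex.le_def.mp (trace_mul_nonneg (mposPart_nonneg A).posSemidef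
      (Matrix.le_iff.mp (projPos_le_one B)))).1
  simp only [sub_mul, mul_sub, mul_one, trace_sub, Complex.sub_re] at hdominate hcontract
  linarith

lemma rank_mposPart_conjTranspose_mul_mul_le (hB : B.IsHermitian) (T : Matrix (Fin n) (Fin m) ℂ) :
    (mposPart (Tᴴ * B * T)).rank ≤ (mposPart B).rank := by
  set A := Tᴴ * B * T with hA
  let R := T * projPos A
  have hcompress : mposPart A = Rᴴ * B * R := by
    calc mposPart A = projPos A * (A * projPos A) := by
          rw [mul_projPos (isHermitian_conjTranspose_mul_mul T hB), projPos_mul_mposPart]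
      _ = (projPos A)ᴴ * (A * projPos A) := by rw [(projPos_nonneg A).posSemidef.1]
      _ = Rᴴ * B * R := by simp only [R, hA, conjTranspose_mul, Matrix.mul_assoc]
  have hle : mposPart A ≤ Rᴴ * mposPart B * R := by
    rw [hcompress, Matrix.le_iff, ← Matrix.sub_mul, ← Matrix.mul_sub]
    exact (Matrix.le_iff.mp (le_mposPart hB)).conjTranspose_mul_mul_same R
  calc (mposPart A).rank ≤ (Rᴴ * mposPart B * R).rank :=
        rank_le_rank_of_le (mposPart_nonneg A) hle
    _ ≤ (Rᴴ * mposPart B).rank := rank_mul_le_left _ _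
    _ ≤ (mposPart B).rank := rank_mul_le_right _ _

lemma rank_mposPart_conjTranspose_mul_mul (hB : B.IsHermitian)
    {T : Matrix (Fin n) (Fin n) ℂ} (hT : IsUnit T) :
    (mposPart (Tᴴ * B * T)).rank = (mposPart B).rank := by
  refine (rank_mposPart_conjTranspose_mul_mul_le hB T).antisymm ?_
  have hdet := (isUnit_iff_isUnit_det T).mp hT
  have hinv : B = T⁻¹ᴴ * (Tᴴ * B * T) * T⁻¹ := by
    rw [← mul_assoc, ← mul_assoc, ← conjTranspose_mul, mul_nonsing_inv _ hdet, mul_assoc,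
      mul_nonsing_inv _ hdet]
    simp
  conv_lhs => rw [hinv]
  exact rank_mposPart_conjTranspose_mul_mul_le (isHermitian_conjTranspose_mul_mul T hB) _

lemma mposPart_sub_smul_one (hA : A.IsHermitian) (s : ℝ) :
    mposPart (A - s • 1) = cfc (fun x : ℝ => max (x - s) 0) A := by
  have hshift : A - s • 1 = cfc (fun x : ℝ => x - s) A := by
    rw [cfc_sub (fun x => x) _ A, cfc_id' ℝ A hA.isSelfAdjoint, cfc_const s A hA.isSelfAdjoint,
      Algebra.algebraMap_eq_smul_one]
  rw [hshift, mposPart, ← cfc_comp' _ _ A]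

lemma rank_mposPart_sub_smul_one (hA : A.IsHermitian) (s : ℝ) :
    ((mposPart (A - s • 1)).rank : ENNReal) = Measure.count {i | s < hA.eigenvalues i} := by
  rw [mposPart_sub_smul_one hA, rank_cfc hA, Measure.count_apply_finite _ (Set.toFinite _),
    Fintype.card_subtype]
  congr 3
  ext i
  simp

lemma lintegral_count_ofReal {ι : Type*} [Fintype ι] [MeasurableSpace ι]
    [MeasurableSingletonClass ι] {f : ι → ℝ} (hf : ∀ i, 0 ≤ f i) :
    ∫⁻ i, ENNReal.ofReal (f i) ∂Measure.count = ENNReal.ofReal (∑ i, f i) := by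
  rw [lintegral_count, tsum_fintype, ENNReal.ofReal_sum_of_nonneg fun i _ => hf i]

lemma ofReal_re_trace_mpow (hA : A.PosSemidef) {p : ℝ} (hp : 0 < p) :
    ENNReal.ofReal (mpow A p).trace.re = ENNReal.ofReal p *
      ∫⁻ s in Set.Ioi (0 : ℝ), (mposPart (A - s • 1)).rank * ENNReal.ofReal (s ^ (p - 1)) := by
  have hcake := lintegral_rpow_eq_lintegral_meas_lt_mul Measure.count
    (ae_of_all _ hA.eigenvalues_nonneg) (measurable_of_finite hA.1.eigenvalues).aemeasurable hp
  rw [lintegral_count_ofReal fun i => Real.rpow_nonneg (hA.eigenvalues_nonneg i) p] at hcake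
  simp only [mpow, trace_cfc hA.1, Complex.coe_algebraMap, Complex.ofReal_re, hcake,
    rank_mposPart_sub_smul_one hA.1]

lemma lintegral_rank_mposPart_sub_smul_one (hA : A.IsHermitian) {γ : ℝ} (hγ : 0 < γ) :
    ∫⁻ t in Set.Ioi (0 : ℝ), ((mposPart (A - (γ * t) • 1)).rank : ENNReal) =
      ENNReal.ofReal ((mposPart A).trace.re / γ) := by
  have hnonneg : ∀ i, 0 ≤ max (hA.eigenvalues i) 0 / γ := fun i => by positivity
  have hcake := lintegral_eq_lintegral_meas_lt Measure.count (ae_of_all _ hnonneg)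
    (measurable_of_finite _).aemeasurable
  rw [lintegral_count_ofReal hnonneg, ← Finset.sum_div] at hcake
  simp only [mposPart, trace_cfc hA]
  refine (setLIntegral_congr_fun measurableSet_Ioi fun t ht => ?_).trans hcake.symm
  rw [← mposPart, rank_mposPart_sub_smul_one hA]
  congr! 3 with i
  rw [lt_div_iff₀' hγ, lt_max_iff, or_iff_left (mul_pos hγ ht).not_gt]

end PosPart

/-- `g` selects a subgradient of the convex function `f` at every point: the line through
`(x, f x)` of slope `g x` lies below the graph of `f`. -/
def IsSubgradient (f g : ℝ → ℝ) : Prop :=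
  ∀ x y, f x + (y - x) * g x ≤ f y

namespace IsSubgradient

variable {f g : ℝ → ℝ}

lemma monotone (h : IsSubgradient f g) : Monotone g := by
  intro x y hxy
  rcases hxy.eq_or_lt with rfl | hlt
  · rfl
  · nlinarith [h x y, h y x]

lemma convexOn (h : IsSubgradient f g) : ConvexOn ℝ Set.univ f := by
  refine ⟨convex_univ, fun x _ y _ a b ha hb hab => ?_⟩
  set z := a • x + b • y
  calc f z = a * (f z + (x - z) * g z) + b * (f z + (y - z) * g z) := by
        simp only [z, smul_eq_mul]
        linear_combination (-f z + (a * x + b * y) * g z) * hab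
    _ ≤ a • f x + b • f y := by
        simp only [smul_eq_mul]
        gcongr
        exacts [h z x, h z y]

lemma continuous (h : IsSubgradient f g) : Continuous f :=
  continuousOn_univ.mp (h.convexOn.continuousOn isOpen_univ)

lemma hasDerivAt (h : IsSubgradient f g) {x : ℝ} (hg : ContinuousAt g x) :
    HasDerivAt f (g x) x := by
  have hdiff : (fun y => g y - g x) =o[nhds x] fun _ => (1 : ℝ) :=
    (Asymptotics.isLittleO_one_iff ℝ).mpr (by simpa using hg.tendsto.sub_const (g x))
  have hremainder : ∀ y, ‖f y - f x - (y - x) • g x‖ ≤ ‖(g y - g x) * (y - x)‖ := by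
    intro y
    have hlower := h x y
    have hupper := h y x
    rw [smul_eq_mul, Real.norm_of_nonneg (by linarith)]
    exact le_trans (by linarith) (le_abs_self _)
  refine hasDerivAt_iff_isLittleO.mpr ((Asymptotics.isBigO_of_le _ hremainder).trans_isLittleO ?_)
  simpa using hdiff.mul_isBigO (Asymptotics.isBigO_refl (fun y => y - x) (nhds x))

lemma integral_eq_sub (h : IsSubgradient f g) {a b : ℝ} (hab : a ≤ b) :
    ∫ x in a..b, g x = f b - f a :=
  integral_eq_of_hasDerivAt_off_countable_of_le f g hab h.monotone.countable_not_continuousAt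
    h.continuous.continuousOn (fun _ hx => h.hasDerivAt (not_not.mp hx.2))
    h.monotone.intervalIntegrable

lemma lintegral_Ioi (h : IsSubgradient f g) (hg : ∀ x, g x ≤ 0)
    (hf : Filter.Tendsto f Filter.atTop (nhds 0)) (a : ℝ) :
    ∫⁻ x in Set.Ioi a, ENNReal.ofReal (-g x) = ENNReal.ofReal (f a) := by
  have hlim : Filter.Tendsto (fun b => ∫ x in a..b, -g x) Filter.atTop (nhds (f a)) := by
    have hsub : Filter.Tendsto (fun b => f a - f b) Filter.atTop (nhds (f a)) := by
      simpa using hf.const_sub (f a)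
    refine hsub.congr' (Filter.eventuallyEq_of_mem (Filter.Ici_mem_atTop a) fun b hb => ?_)
    simp only [intervalIntegral.integral_neg, h.integral_eq_sub hb, neg_sub]
  have hint : IntegrableOn (fun x => -g x) (Set.Ioi a) := by
    refine integrableOn_Ioi_of_intervalIntegral_norm_tendsto (f a) a (fun b => ?_)
      Filter.tendsto_id ?_
    · exact (h.monotone.locallyIntegrable.integrableOn_isCompact isCompact_Icc).neg.mono_set
        Set.Ioc_subset_Icc_self
    · simpa only [Real.norm_of_nonneg (neg_nonneg.mpr (hg _)), id_eq] using hlim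
  rw [← ofReal_integral_eq_lintegral_ofReal hint (ae_of_all _ fun x => neg_nonneg.mpr (hg x)),
    tendsto_nhds_unique hlim (intervalIntegral_tendsto_integral_Ioi a hint Filter.tendsto_id)]

end IsSubgradient

lemma lintegral_rpow_mul_eq_lintegral_tail {G : ℝ → ENNReal} (hG : Measurable G) {p : ℝ}
    (hp : 0 < p) :
    ∫⁻ x in Set.Ioi (0 : ℝ), ENNReal.ofReal (x ^ p) * G x = ENNReal.ofReal p *
      ∫⁻ t in Set.Ioi (0 : ℝ), (∫⁻ x in Set.Ioi t, G x) * ENNReal.ofReal (t ^ (p - 1)) := by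
  have hnonneg : ∀ᵐ x ∂(volume.restrict (Set.Ioi (0 : ℝ))).withDensity G, 0 ≤ x :=
    (withDensity_absolutelyContinuous _ G).ae_le
      (ae_restrict_of_forall_mem measurableSet_Ioi fun x hx => (Set.mem_Ioi.mp hx).le)
  have hcake := lintegral_rpow_eq_lintegral_meas_lt_mul _ hnonneg aemeasurable_id hp
  rw [lintegral_withDensity_eq_lintegral_mul _ hG (by fun_prop)] at hcake
  simp only [Pi.mul_apply, mul_comm (G _)] at hcake
  have htail : ∀ t ∈ Set.Ioi (0 : ℝ),
      (volume.restrict (Set.Ioi (0 : ℝ))).withDensity G (Set.Ioi t) = ∫⁻ x in Set.Ioi t, G x := by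
    intro t ht
    rw [withDensity_apply _ measurableSet_Ioi, Measure.restrict_restrict measurableSet_Ioi,
      Set.inter_eq_left.mpr (Set.Ioi_subset_Ioi (Set.mem_Ioi.mp ht).le)]
  rw [hcake]
  exact congrArg _ (setLIntegral_congr_fun measurableSet_Ioi
    fun t ht => congrArg (· * _) (htail t ht))

lemma IsSubgradient.lintegral_rpow_mul {f g : ℝ → ℝ} (h : IsSubgradient f g) (hg : ∀ x, g x ≤ 0)
    (hf : Filter.Tendsto f Filter.atTop (nhds 0)) {p : ℝ} (hp : 0 < p) :
    ∫⁻ x in Set.Ioi (0 : ℝ), ENNReal.ofReal (x ^ p * -g x) = ENNReal.ofReal p *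
      ∫⁻ x in Set.Ioi (0 : ℝ), ENNReal.ofReal (f x) * ENNReal.ofReal (x ^ (p - 1)) := by
  have hmeas : Measurable fun x => ENNReal.ofReal (-g x) :=
    h.monotone.measurable.neg.ennreal_ofReal
  simp only [ENNReal.ofReal_mul' (neg_nonneg.mpr (hg _)),
    lintegral_rpow_mul_eq_lintegral_tail hmeas hp, h.lintegral_Ioi hg hf]

section SymmRatio

open scoped MatrixOrder

variable {n : ℕ} {A B ρ σ : Matrix (Fin n) (Fin n) ℂ}

/-- The quotient `B^{-1/2} A B^{-1/2}` of `A` by a positive matrix `B`, in the ordering that keeps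
it Hermitian. Negative powers being taken on the support, it is meaningful for singular `B` as soon
as the support of `A` is contained in that of `B`. -/
def symmRatio (A B : Matrix (Fin n) (Fin n) ℂ) : Matrix (Fin n) (Fin n) ℂ :=
  mpow B (-(1 / 2)) * A * mpow B (-(1 / 2))

lemma isHermitian_mpow (A : Matrix (Fin n) (Fin n) ℂ) (p : ℝ) : (mpow A p).IsHermitian :=
  cfc_predicate _ A

lemma posSemidef_mpow (hA : A.PosSemidef) (p : ℝ) : (mpow A p).PosSemidef :=
  (cfc_nonneg fun _ hx => Real.rpow_nonneg (spectrum_nonneg_of_nonneg hA.nonneg hx) p).posSemidef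

lemma isHermitian_symmRatio (hA : A.IsHermitian) (B : Matrix (Fin n) (Fin n) ℂ) :
    (symmRatio A B).IsHermitian := by
  have hconj := isHermitian_mul_mul_conjTranspose (mpow B (-(1 / 2))) hA
  rwa [(isHermitian_mpow B _).eq] at hconj

lemma posSemidef_symmRatio (hA : A.PosSemidef) (B : Matrix (Fin n) (Fin n) ℂ) :
    (symmRatio A B).PosSemidef := by
  have hconj := hA.mul_mul_conjTranspose_same (mpow B (-(1 / 2)))
  rwa [(isHermitian_mpow B _).eq] at hconj

lemma re_trace_mpow_symmRatio_nonneg (hρ : ρ.PosSemidef) (σ : Matrix (Fin n) (Fin n) ℂ) (p : ℝ) :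
    0 ≤ (mpow (symmRatio ρ σ) p).trace.re :=
  (Complex.le_def.mp (posSemidef_mpow (posSemidef_symmRatio hρ σ) p).trace_nonneg).1

lemma symmRatio_self (hB : B.PosDef) : symmRatio B B = 1 := by
  have hpos : ∀ x ∈ spectrum ℝ B, 0 < x := fun _ => hB.isStrictlyPositive.spectrum_pos
  calc symmRatio B B = cfc (fun x : ℝ => x ^ (-(1 / 2) : ℝ) * x * x ^ (-(1 / 2) : ℝ)) B := by
        rw [cfc_mul_of_matrix, cfc_mul_of_matrix, cfc_id' ℝ B hB.1.isSelfAdjoint]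
        rfl
    _ = cfc (fun _ => (1 : ℝ)) B := cfc_congr fun x hx => by
        have hx := hpos x hx
        nth_rw 2 [← Real.rpow_one x]
        rw [← Real.rpow_add hx, ← Real.rpow_add hx]
        norm_num
    _ = 1 := cfc_const_one ℝ B hB.1.isSelfAdjoint

lemma symmRatio_sub_smul (A B : Matrix (Fin n) (Fin n) ℂ) (γ : ℝ) (hB : B.PosDef) :
    symmRatio A B - γ • 1 = symmRatio (A - γ • B) B := by
  rw [← symmRatio_self hB]
  simp only [symmRatio, mul_sub, sub_mul, mul_smul_comm, smul_mul_assoc]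

lemma rank_mposPart_symmRatio (hA : A.IsHermitian) (hB : B.PosDef) :
    (mposPart (symmRatio A B)).rank = (mposPart A).rank := by
  have hunit : IsUnit (mpow B (-(1 / 2))) := by
    refine IsUnit.of_mul_eq_one (B * mpow B (-(1 / 2))) ?_
    rw [← mul_assoc]
    exact symmRatio_self hB
  have hconj := rank_mposPart_conjTranspose_mul_mul hA hunit
  rwa [(isHermitian_mpow B _).eq] at hconj

lemma ofReal_re_trace_mpow_symmRatio (hA : A.PosSemidef) (hB : B.PosDef) {p : ℝ} (hp : 0 < p) :
    ENNReal.ofReal (mpow (symmRatio A B) p).trace.re = ENNReal.ofReal p *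
      ∫⁻ γ in Set.Ioi (0 : ℝ),
        (mposPart (A - γ • B)).rank * ENNReal.ofReal (γ ^ (p - 1)) := by
  rw [ofReal_re_trace_mpow (posSemidef_symmRatio hA B) hp]
  congr! 5 with γ
  have hherm : (A - γ • B).IsHermitian := hA.1.sub (hB.1.smul (IsSelfAdjoint.all γ))
  rw [symmRatio_sub_smul A B γ hB, rank_mposPart_symmRatio hherm hB]

lemma measurable_rank_mposPart_mul_rpow (hρ : ρ.IsHermitian) (hσ : σ.IsHermitian) (p : ℝ) :
    Measurable fun z : ℝ × ℝ =>
      ((mposPart (ρ - z.2 • (σ + z.1 • 1))).rank : ENNReal) * ENNReal.ofReal (z.2 ^ p) := by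
  have hherm (z : ℝ × ℝ) : (ρ - z.2 • (σ + z.1 • 1)).IsHermitian :=
    hρ.sub ((hσ.add (isHermitian_one.smul (IsSelfAdjoint.all _))).smul (IsSelfAdjoint.all _))
  have hcont : Continuous fun z : ℝ × ℝ => mposPart (ρ - z.2 • (σ + z.1 • 1)) :=
    continuousOn_mposPart.comp_continuous (by fun_prop) hherm
  have hrank : Measurable fun z : ℝ × ℝ =>
      ((mposPart (ρ - z.2 • (σ + z.1 • 1))).rank : ENNReal) :=
    measurable_from_top.comp (lowerSemicontinuous_rank.comp hcont).measurable
  exact hrank.mul (by fun_prop)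

lemma aestronglyMeasurable_trace_mpow_symmRatio (hρ : ρ.PosSemidef) (hσ : σ.PosSemidef) {p : ℝ}
    (hp : 0 < p) :
    AEStronglyMeasurable (fun t : ℝ => (mpow (symmRatio ρ (σ + t • 1)) p).trace.re)
      (volume.restrict (Set.Ioi 0)) := by
  have hmeas : Measurable fun t : ℝ => ∫⁻ γ in Set.Ioi (0 : ℝ),
      (mposPart (ρ - γ • (σ + t • 1))).rank * ENNReal.ofReal (γ ^ (p - 1)) :=
    (measurable_rank_mposPart_mul_rpow hρ.1 hσ.1 _).lintegral_prod_right'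
  refine (hmeas.const_mul (ENNReal.ofReal p)).ennreal_toReal.aestronglyMeasurable.congr
    (ae_restrict_of_forall_mem measurableSet_Ioi fun t ht => ?_)
  dsimp only
  rw [← ofReal_re_trace_mpow_symmRatio hρ (.posSemidef_add hσ (PosDef.one.smul ht)) hp,
    ENNReal.toReal_ofReal (re_trace_mpow_symmRatio_nonneg hρ _ p)]

/-- Both sides are `p` times the integral of `γ ^ (p - 1) * rank (ρ - γ(σ + t))₊` over the
quadrant `γ, t > 0`. -/
lemma lintegral_trace_mpow_symmRatio (hρ : ρ.PosSemidef) (hσ : σ.PosSemidef) {p : ℝ}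
    (hp : 0 < p) :
    ∫⁻ t in Set.Ioi (0 : ℝ), ENNReal.ofReal (mpow (symmRatio ρ (σ + t • 1)) p).trace.re =
      ENNReal.ofReal p * ∫⁻ γ in Set.Ioi (0 : ℝ),
        ENNReal.ofReal (mposPart (ρ - γ • σ)).trace.re * ENNReal.ofReal (γ ^ (p - 1 - 1)) := by
  have hinner : ∀ γ ∈ Set.Ioi (0 : ℝ),
      ∫⁻ t in Set.Ioi (0 : ℝ), ((mposPart (ρ - γ • (σ + t • 1))).rank : ENNReal) *
          ENNReal.ofReal (γ ^ (p - 1)) =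
        ENNReal.ofReal (mposPart (ρ - γ • σ)).trace.re * ENNReal.ofReal (γ ^ (p - 1 - 1)) := by
    intro γ (hγ : 0 < γ)
    have hherm : (ρ - γ • σ).IsHermitian := hρ.1.sub (hσ.1.smul (IsSelfAdjoint.all γ))
    have hshift (t : ℝ) : ρ - γ • (σ + t • 1) = ρ - γ • σ - (γ * t) • 1 := by
      rw [smul_add, smul_smul, sub_add_eq_sub_sub]
    simp only [hshift]
    rw [lintegral_mul_const' _ _ ENNReal.ofReal_ne_top,
      lintegral_rank_mposPart_sub_smul_one hherm hγ, Real.rpow_sub_one hγ.ne' (p - 1),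
      ENNReal.ofReal_div_of_pos hγ, ENNReal.ofReal_div_of_pos hγ, ENNReal.mul_comm_div]
  calc _ = ∫⁻ t in Set.Ioi (0 : ℝ), ENNReal.ofReal p * ∫⁻ γ in Set.Ioi (0 : ℝ),
          (mposPart (ρ - γ • (σ + t • 1))).rank * ENNReal.ofReal (γ ^ (p - 1)) :=
        setLIntegral_congr_fun measurableSet_Ioi fun t ht =>
          ofReal_re_trace_mpow_symmRatio hρ (.posSemidef_add hσ (PosDef.one.smul ht)) hp
    _ = ENNReal.ofReal p * ∫⁻ γ in Set.Ioi (0 : ℝ), ∫⁻ t in Set.Ioi (0 : ℝ),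
          (mposPart (ρ - γ • (σ + t • 1))).rank * ENNReal.ofReal (γ ^ (p - 1)) := by
        rw [lintegral_const_mul' _ _ ENNReal.ofReal_ne_top, lintegral_lintegral_swap]
        exact (measurable_rank_mposPart_mul_rpow hρ.1 hσ.1 _).aemeasurable
    _ = _ := by rw [setLIntegral_congr_fun measurableSet_Ioi hinner]

end SymmRatio

section HockeyStick

open scoped MatrixOrder

variable {n : ℕ} {ρ σ : Matrix (Fin n) (Fin n) ℂ}

lemma mpow_half_mul_mpow_half (hσ : σ.PosSemidef) : mpow σ (1 / 2) * mpow σ (1 / 2) = σ := by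
  rw [mpow, ← cfc_mul_of_matrix]
  conv_rhs => rw [← cfc_id' ℝ σ hσ.1.isSelfAdjoint]
  refine cfc_congr fun x hx => ?_
  have hx : 0 ≤ x := spectrum_nonneg_of_nonneg hσ.nonneg hx
  simp only [← Real.sqrt_eq_rpow, Real.mul_self_sqrt hx]

lemma mul_mpow_neg_half_mul_mpow_half (hσ : σ.PosSemidef) :
    σ * (mpow σ (-(1 / 2)) * mpow σ (1 / 2)) = σ := by
  conv_lhs => enter [1]; rw [← cfc_id' ℝ σ hσ.1.isSelfAdjoint]
  conv_rhs => rw [← cfc_id' ℝ σ hσ.1.isSelfAdjoint]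
  rw [mpow, mpow, ← cfc_mul_of_matrix, ← cfc_mul_of_matrix]
  refine cfc_congr fun x hx => ?_
  rcases (spectrum_nonneg_of_nonneg hσ.nonneg hx : 0 ≤ x).eq_or_lt with rfl | hx
  · simp only [zero_mul]
  · simp only [← Real.rpow_add hx, neg_add_cancel, Real.rpow_zero, mul_one]

lemma mpow_half_mul_symmRatio_mul_mpow_half (hρ : ρ.IsHermitian) (hσ : σ.PosSemidef)
    (hsupp : ∀ x : Fin n → ℂ, σ *ᵥ x = 0 → ρ *ᵥ x = 0) :
    mpow σ (1 / 2) * symmRatio ρ σ * mpow σ (1 / 2) = ρ := by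
  let P := mpow σ (-(1 / 2)) * mpow σ (1 / 2)
  have hρP : ρ * P = ρ := by
    rw [← sub_eq_zero, ← mul_sub_one]
    refine ext_iff_mulVec.mpr fun x => ?_
    rw [← mulVec_mulVec, zero_mulVec]
    apply hsupp
    rw [mulVec_mulVec, mul_sub_one, mul_mpow_neg_half_mul_mpow_half hσ, sub_self, zero_mulVec]
  have hPρ : mpow σ (1 / 2) * mpow σ (-(1 / 2)) * ρ = ρ := by
    have hadjoint := congrArg conjTranspose hρP
    rwa [conjTranspose_mul, conjTranspose_mul, (isHermitian_mpow σ _).eq,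
      (isHermitian_mpow σ _).eq, hρ.eq] at hadjoint
  calc mpow σ (1 / 2) * symmRatio ρ σ * mpow σ (1 / 2)
      = mpow σ (1 / 2) * mpow σ (-(1 / 2)) * ρ * P := by
        simp only [symmRatio, P, mul_assoc]
    _ = ρ := by rw [hPρ, hρP]

lemma exists_le_smul_of_ker_le (hρ : ρ.IsHermitian) (hσ : σ.PosSemidef)
    (hsupp : ∀ x : Fin n → ℂ, σ *ᵥ x = 0 → ρ *ᵥ x = 0) : ∃ c : ℝ, ρ ≤ c • σ := by
  obtain ⟨c, hc⟩ := (finite_real_spectrum (A := symmRatio ρ σ)).bddAbove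
  have hle : symmRatio ρ σ ≤ c • 1 := by
    rw [← Algebra.algebraMap_eq_smul_one, le_algebraMap_iff_spectrum_le
      (isHermitian_symmRatio hρ σ).isSelfAdjoint]
    exact hc
  refine ⟨c, ?_⟩
  calc ρ = mpow σ (1 / 2) * symmRatio ρ σ * mpow σ (1 / 2) :=
        (mpow_half_mul_symmRatio_mul_mpow_half hρ hσ hsupp).symm
    _ ≤ mpow σ (1 / 2) * c • 1 * mpow σ (1 / 2) :=
        IsSelfAdjoint.conjugate_le_conjugate hle (isHermitian_mpow σ _)
    _ = c • σ := by
        rw [mul_smul_comm, mul_one, smul_mul_assoc, mpow_half_mul_mpow_half hσ]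

lemma isSubgradient_trace_mposPart (hρ : ρ.IsHermitian) (hσ : σ.IsHermitian) :
    IsSubgradient (fun γ => (mposPart (ρ - γ • σ)).trace.re)
      (fun γ => -(σ * projPos (ρ - γ • σ)).trace.re) := by
  intro x y
  have hherm (γ : ℝ) : (ρ - γ • σ).IsHermitian := hρ.sub (hσ.smul (IsSelfAdjoint.all γ))
  calc (mposPart (ρ - x • σ)).trace.re + (y - x) * -(σ * projPos (ρ - x • σ)).trace.re
      = ((ρ - y • σ) * projPos (ρ - x • σ)).trace.re := by
        rw [← mul_projPos (hherm x)]
        simp only [sub_mul, smul_mul_assoc, trace_sub, trace_smul, Complex.sub_re,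
          Complex.smul_re, smul_eq_mul]
        ring
    _ ≤ (mposPart (ρ - y • σ)).trace.re := re_trace_mul_projPos_le (hherm y)

lemma measurable_re_trace_mul_projPos (hρ : ρ.IsHermitian) (hσ : σ.IsHermitian) :
    Measurable fun γ : ℝ => (σ * projPos (ρ - γ • σ)).trace.re := by
  simpa only [neg_neg] using (isSubgradient_trace_mposPart hρ hσ).monotone.measurable.fun_neg

lemma tendsto_trace_mposPart (hρ : ρ.IsHermitian) (hσ : σ.PosSemidef)
    (hsupp : ∀ x : Fin n → ℂ, σ *ᵥ x = 0 → ρ *ᵥ x = 0) :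
    Filter.Tendsto (fun γ : ℝ => (mposPart (ρ - γ • σ)).trace.re) Filter.atTop (nhds 0) := by
  obtain ⟨c, hc⟩ := exists_le_smul_of_ker_le hρ hσ hsupp
  refine tendsto_const_nhds.congr' (Filter.eventuallyEq_of_mem (Filter.Ici_mem_atTop c) ?_)
  intro γ (hγ : c ≤ γ)
  have hle : ρ - γ • σ ≤ 0 :=
    sub_nonpos.mpr (hc.trans (smul_le_smul_of_nonneg_right hγ hσ.nonneg))
  simp only [mposPart_eq_zero_of_nonpos hle, trace_zero, Complex.zero_re]

lemma re_trace_mul_projPos_nonneg (hσ : σ.PosSemidef) (A : Matrix (Fin n) (Fin n) ℂ) :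
    0 ≤ (σ * projPos A).trace.re :=
  (Complex.le_def.mp (trace_mul_nonneg hσ (projPos_nonneg A).posSemidef)).1

lemma lintegral_trace_mul_projPos (hρ : ρ.IsHermitian) (hσ : σ.PosSemidef)
    (hsupp : ∀ x : Fin n → ℂ, σ *ᵥ x = 0 → ρ *ᵥ x = 0) {p : ℝ} (hp : 0 < p) :
    ∫⁻ γ in Set.Ioi (0 : ℝ), ENNReal.ofReal (γ ^ p * (σ * projPos (ρ - γ • σ)).trace.re) =
      ENNReal.ofReal p * ∫⁻ γ in Set.Ioi (0 : ℝ),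
        ENNReal.ofReal (mposPart (ρ - γ • σ)).trace.re * ENNReal.ofReal (γ ^ (p - 1)) := by
  rw [← (isSubgradient_trace_mposPart hρ hσ.1).lintegral_rpow_mul
    (fun γ => neg_nonpos.mpr (re_trace_mul_projPos_nonneg hσ _))
    (tendsto_trace_mposPart hρ hσ hsupp) hp]
  simp only [neg_neg]

theorem hellinger_trace_representation_general (hρ : ρ.PosSemidef) (hσ : σ.PosSemidef)
    (hsupp : ∀ x : Fin n → ℂ, σ *ᵥ x = 0 → ρ *ᵥ x = 0) {α : ℝ} (hα : 1 < α) :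
    (α - 1) * ∫ t in Set.Ioi (0 : ℝ), (mpow (symmRatio ρ (σ + t • 1)) α).trace.re =
      α * ∫ γ in Set.Ioi (0 : ℝ), γ ^ (α - 1) * (σ * projPos (ρ - γ • σ)).trace.re := by
  have hα0 : 0 < α := by linarith
  have hα1 : 0 < α - 1 := by linarith
  have hleft : AEStronglyMeasurable
      (fun t : ℝ => (mpow (symmRatio ρ (σ + t • 1)) α).trace.re) (volume.restrict (Set.Ioi 0)) :=
    aestronglyMeasurable_trace_mpow_symmRatio hρ hσ hα0
  have hright : Measurable fun γ : ℝ => γ ^ (α - 1) * (σ * projPos (ρ - γ • σ)).trace.re :=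
    .mul (by fun_prop) (measurable_re_trace_mul_projPos hρ.1 hσ.1)
  rw [integral_eq_lintegral_of_nonneg_ae
      (ae_of_all _ fun t => re_trace_mpow_symmRatio_nonneg hρ _ α) hleft,
    integral_eq_lintegral_of_nonneg_ae (ae_restrict_of_forall_mem measurableSet_Ioi fun γ hγ =>
      mul_nonneg (Real.rpow_nonneg (Set.mem_Ioi.mp hγ).le _) (re_trace_mul_projPos_nonneg hσ _))
      hright.aestronglyMeasurable,
    lintegral_trace_mpow_symmRatio hρ hσ hα0, lintegral_trace_mul_projPos hρ.1 hσ hsupp hα1,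
    ENNReal.toReal_mul, ENNReal.toReal_mul, ENNReal.toReal_ofReal hα0.le,
    ENNReal.toReal_ofReal hα1.le]
  ring

end HockeyStick

/-- for density matrices `ρ ≪ σ` and `α > 1`, the Hellinger divergence
`H_α`, defined by `(α-1)H_α + 1 = α ∫₀^∞ γ^{α-1} Tr[σ{ρ > γσ}] dγ`, satisfies
`H_α = -1/(α-1) + ∫₀^∞ Tr[((σ+t·1)^{-1/2} ρ (σ+t·1)^{-1/2})^α] dt`. -/
theorem hellinger_trace_representation {n : ℕ} (ρ σ : Matrix (Fin n) (Fin n) ℂ)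
    (hρ : ρ.PosSemidef) (hσ : σ.PosSemidef) (hρ1 : ρ.trace = 1) (hσ1 : σ.trace = 1)
    (hsupp : ∀ x : Fin n → ℂ, σ *ᵥ x = 0 → ρ *ᵥ x = 0)
    (α : ℝ) (hα : 1 < α) (H : ℝ)
    (hH : (α - 1) * H + 1
      = α * ∫ γ in Set.Ioi (0:ℝ),
            γ ^ (α - 1) * (Matrix.trace (σ * projPos (ρ - γ • σ))).re) :
    H = -1 / (α - 1) +
        ∫ t in Set.Ioi (0:ℝ),
          (Matrix.trace
            (mpow (mpow (σ + t • 1) (-(1/2)) * ρ * mpow (σ + t • 1) (-(1/2))) α)).re := by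
  have hα1 : α - 1 ≠ 0 := sub_ne_zero.mpr hα.ne'
  rw [← hellinger_trace_representation_general hρ hσ hsupp hα] at hH
  unfold symmRatio at hH
  field_simp
  linarith
end
end
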